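/- Let q be an odd prime power, n an odd positive integer, and h ∈ GL_n(F_q) symmetric (hᵗ = h). Let π : GL_n(F_q) → PGL_n(F_q) be the canonical projection, O(h) = {g ∈ GL_n(F_q) : g·h·gᵗ = h}, SO(h) = {g ∈ O(h) : det g = 1}, and S(h) = {ḡ ∈ PGL_n(F_q) : g·h·gᵗ = α·h for some α ∈ F_q^×}. Then for every complex class function χ on PGL_n(F_q): ⟨χ, Ind_{S(h)}^{PGL_n(F_q)}(1)⟩ = ⟨χ∘π, Ind_{SO(h)}^{GL_n(F_q)}(1)⟩ = ⟨χ∘π, Ind_{O(h)}^{GL_n(F_q)}(1)⟩. -/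

import Mathlib

/-!
For arbitrary functions, `⟨f, Ind_H^G φ⟩` is the average of `f (y x y⁻¹) * conj (φ x)` over `y ∈ G`
and `x ∈ H`, and averages over groups are unchanged by pushing forward along a surjection. Hence
`⟨χ ∘ π, Ind_K 1⟩ = ⟨χ, Ind_{π(K)} 1⟩`, and it remains to see that `SO(h)`, `O(h)` and the
similitude group have the same image in `PGL_n`. In odd dimension every similitude can be rescaled
into `SO(h)`: if `g` has multiplier `α` and `n = 2k + 1`, then `(det g)² = αⁿ`, so `c = αᵏ / det g`
satisfies `c² α = 1` and `cⁿ det g = 1`.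
-/

open Matrix
/-- The subgroup of nonzero scalar matrices in `GL (Fin n) F`, i.e. `Z ≅ F^×`. -/
def scalarSub (n : ℕ) (F : Type) [Field F] : Subgroup (GL (Fin n) F) :=
  (Units.map (Matrix.scalar (Fin n)).toMonoidHom).range

instance scalarSub_normal (n : ℕ) (F : Type) [Field F] : (scalarSub n F).Normal := by
  constructor
  rintro x ⟨c, rfl⟩ g
  refine ⟨c, Units.ext ?_⟩
  have hc : (Matrix.scalar (Fin n) (c : F)) * (↑g : Matrix (Fin n) (Fin n) F)
      = (↑g : Matrix (Fin n) (Fin n) F) * Matrix.scalar (Fin n) (c : F) :=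
    Matrix.scalar_commute (c : F) (fun r => mul_comm _ r) _
  simp only [Units.coe_map, RingHom.toMonoidHom_eq_coe, MonoidHom.coe_coe, Units.val_mul]
  rw [← hc, mul_assoc, ← Units.val_mul, mul_inv_cancel, Units.val_one, mul_one]

/-- The projective general linear group `PGL_n(F) = GL_n(F)/Z`. -/
abbrev PGL (n : ℕ) (F : Type) [Field F] : Type :=
  GL (Fin n) F ⧸ scalarSub n F

/-- The canonical projection `GL_n(F) → PGL_n(F)`. -/
def pgl (n : ℕ) (F : Type) [Field F] : GL (Fin n) F →* PGL n F :=
  QuotientGroup.mk' (scalarSub n F)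

lemma GL_inv_mul_coe {n : ℕ} {F : Type} [Field F] (a : GL (Fin n) F) :
    ((a⁻¹ : GL (Fin n) F) : Matrix (Fin n) (Fin n) F) *
      ((a : GL (Fin n) F) : Matrix (Fin n) (Fin n) F) = 1 := by
  have := congrArg (Units.val) (inv_mul_cancel a)
  rwa [Units.val_mul, Units.val_one] at this

lemma GL_transpose_mul_transpose {n : ℕ} {F : Type} [Field F] (a : GL (Fin n) F) :
    ((a : GL (Fin n) F) : Matrix (Fin n) (Fin n) F)ᵀ *
      ((a⁻¹ : GL (Fin n) F) : Matrix (Fin n) (Fin n) F)ᵀ = 1 := by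
  rw [← transpose_mul, GL_inv_mul_coe, transpose_one]

/-- The similitude group of the bilinear form `h`:
`{g ∈ GL_n(F) : g·h·gᵗ = α·h for some α ∈ F^×}`. -/
def Sim {n : ℕ} {F : Type} [Field F] (h : Matrix (Fin n) (Fin n) F) :
    Subgroup (GL (Fin n) F) where
  carrier := {g | ∃ α : Fˣ,
    (↑g : Matrix (Fin n) (Fin n) F) * h * (↑g : Matrix (Fin n) (Fin n) F)ᵀ = (α : F) • h}
  one_mem' := ⟨1, by simp⟩
  mul_mem' := by
    rintro a b ⟨α, ha⟩ ⟨β, hb⟩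
    refine ⟨β * α, ?_⟩
    show (↑(a * b) : Matrix (Fin n) (Fin n) F) * h * (↑(a * b) : Matrix (Fin n) (Fin n) F)ᵀ = _
    rw [Units.val_mul, transpose_mul]
    calc (↑a : Matrix (Fin n) (Fin n) F) * ↑b * h *
          ((↑b : Matrix (Fin n) (Fin n) F)ᵀ * (↑a : Matrix (Fin n) (Fin n) F)ᵀ)
        = ↑a * ((↑b : Matrix (Fin n) (Fin n) F) * h * (↑b : Matrix (Fin n) (Fin n) F)ᵀ) *
          (↑a : Matrix (Fin n) (Fin n) F)ᵀ := by
          simp only [mul_assoc]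
      _ = (β : F) • ((↑a : Matrix (Fin n) (Fin n) F) * h * (↑a : Matrix (Fin n) (Fin n) F)ᵀ) := by
          rw [hb, mul_smul_comm, smul_mul_assoc]
      _ = (β : F) • ((α : F) • h) := by rw [ha]
      _ = ((β * α : Fˣ) : F) • h := by rw [smul_smul, Units.val_mul]
  inv_mem' := by
    rintro a ⟨α, ha⟩
    refine ⟨α⁻¹, ?_⟩
    show (↑(a⁻¹) : Matrix (Fin n) (Fin n) F) * h * (↑(a⁻¹) : Matrix (Fin n) (Fin n) F)ᵀ = _
    have key : (α : F) • ((↑(a⁻¹) : Matrix (Fin n) (Fin n) F) * h *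
        (↑(a⁻¹) : Matrix (Fin n) (Fin n) F)ᵀ) = h := by
      calc (α : F) • ((↑(a⁻¹) : Matrix (Fin n) (Fin n) F) * h *
            (↑(a⁻¹) : Matrix (Fin n) (Fin n) F)ᵀ)
          = (↑(a⁻¹) : Matrix (Fin n) (Fin n) F) * ((α : F) • h) *
            (↑(a⁻¹) : Matrix (Fin n) (Fin n) F)ᵀ := by
            rw [mul_smul_comm, smul_mul_assoc]
        _ = (↑(a⁻¹) : Matrix (Fin n) (Fin n) F) *
            ((↑a : Matrix (Fin n) (Fin n) F) * h * (↑a : Matrix (Fin n) (Fin n) F)ᵀ) *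
            (↑(a⁻¹) : Matrix (Fin n) (Fin n) F)ᵀ := by rw [ha]
        _ = ((↑(a⁻¹) : Matrix (Fin n) (Fin n) F) * ↑a) * h *
            ((↑a : Matrix (Fin n) (Fin n) F)ᵀ * (↑(a⁻¹) : Matrix (Fin n) (Fin n) F)ᵀ) := by
            simp only [mul_assoc]
        _ = h := by rw [GL_inv_mul_coe, GL_transpose_mul_transpose, one_mul, mul_one]
    calc (↑(a⁻¹) : Matrix (Fin n) (Fin n) F) * h * (↑(a⁻¹) : Matrix (Fin n) (Fin n) F)ᵀ
        = ((α : F))⁻¹ • ((α : F) • ((↑(a⁻¹) : Matrix (Fin n) (Fin n) F) * h *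
          (↑(a⁻¹) : Matrix (Fin n) (Fin n) F)ᵀ)) := by
          rw [smul_smul, inv_mul_cancel₀ (Units.ne_zero α), one_smul]
      _ = ((α⁻¹ : Fˣ) : F) • h := by rw [key, Units.val_inv_eq_inv_val]

/-- The subgroup of similitudes whose factor is a square:
`{g ∈ GL_n(F) : g·h·gᵗ = β²·h for some β ∈ F^×}`. -/
def Sim0 {n : ℕ} {F : Type} [Field F] (h : Matrix (Fin n) (Fin n) F) :
    Subgroup (GL (Fin n) F) where
  carrier := {g | ∃ β : Fˣ,
    (↑g : Matrix (Fin n) (Fin n) F) * h * (↑g : Matrix (Fin n) (Fin n) F)ᵀ = ((β : F))^2 • h}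
  one_mem' := ⟨1, by simp⟩
  mul_mem' := by
    rintro a b ⟨α, ha⟩ ⟨β, hb⟩
    refine ⟨β * α, ?_⟩
    show (↑(a * b) : Matrix (Fin n) (Fin n) F) * h * (↑(a * b) : Matrix (Fin n) (Fin n) F)ᵀ = _
    rw [Units.val_mul, transpose_mul]
    calc (↑a : Matrix (Fin n) (Fin n) F) * ↑b * h *
          ((↑b : Matrix (Fin n) (Fin n) F)ᵀ * (↑a : Matrix (Fin n) (Fin n) F)ᵀ)
        = ↑a * ((↑b : Matrix (Fin n) (Fin n) F) * h * (↑b : Matrix (Fin n) (Fin n) F)ᵀ) *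
          (↑a : Matrix (Fin n) (Fin n) F)ᵀ := by
          simp only [mul_assoc]
      _ = ((β : F))^2 • ((↑a : Matrix (Fin n) (Fin n) F) * h *
          (↑a : Matrix (Fin n) (Fin n) F)ᵀ) := by
          rw [hb, mul_smul_comm, smul_mul_assoc]
      _ = ((β : F))^2 • (((α : F))^2 • h) := by rw [ha]
      _ = ((↑(β * α) : F))^2 • h := by rw [smul_smul, Units.val_mul, mul_pow]
  inv_mem' := by
    rintro a ⟨α, ha⟩
    refine ⟨α⁻¹, ?_⟩
    show (↑(a⁻¹) : Matrix (Fin n) (Fin n) F) * h * (↑(a⁻¹) : Matrix (Fin n) (Fin n) F)ᵀ = _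
    have key : ((α : F))^2 • ((↑(a⁻¹) : Matrix (Fin n) (Fin n) F) * h *
        (↑(a⁻¹) : Matrix (Fin n) (Fin n) F)ᵀ) = h := by
      calc ((α : F))^2 • ((↑(a⁻¹) : Matrix (Fin n) (Fin n) F) * h *
            (↑(a⁻¹) : Matrix (Fin n) (Fin n) F)ᵀ)
          = (↑(a⁻¹) : Matrix (Fin n) (Fin n) F) * (((α : F))^2 • h) *
            (↑(a⁻¹) : Matrix (Fin n) (Fin n) F)ᵀ := by
            rw [mul_smul_comm, smul_mul_assoc]
        _ = (↑(a⁻¹) : Matrix (Fin n) (Fin n) F) *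
            ((↑a : Matrix (Fin n) (Fin n) F) * h * (↑a : Matrix (Fin n) (Fin n) F)ᵀ) *
            (↑(a⁻¹) : Matrix (Fin n) (Fin n) F)ᵀ := by rw [ha]
        _ = ((↑(a⁻¹) : Matrix (Fin n) (Fin n) F) * ↑a) * h *
            ((↑a : Matrix (Fin n) (Fin n) F)ᵀ * (↑(a⁻¹) : Matrix (Fin n) (Fin n) F)ᵀ) := by
            simp only [mul_assoc]
        _ = h := by rw [GL_inv_mul_coe, GL_transpose_mul_transpose, one_mul, mul_one]
    calc (↑(a⁻¹) : Matrix (Fin n) (Fin n) F) * h * (↑(a⁻¹) : Matrix (Fin n) (Fin n) F)ᵀ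
        = (((α : F))^2)⁻¹ • (((α : F))^2 • ((↑(a⁻¹) : Matrix (Fin n) (Fin n) F) * h *
          (↑(a⁻¹) : Matrix (Fin n) (Fin n) F)ᵀ)) := by
          rw [smul_smul, inv_mul_cancel₀ (pow_ne_zero 2 (Units.ne_zero α)), one_smul]
      _ = ((↑(α⁻¹) : F))^2 • h := by
          rw [key, Units.val_inv_eq_inv_val, inv_pow]

/-- The isometry group of the bilinear form `h`: `{g ∈ GL_n(F) : g·h·gᵗ = h}`. -/
def Isom {n : ℕ} {F : Type} [Field F] (h : Matrix (Fin n) (Fin n) F) :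
    Subgroup (GL (Fin n) F) where
  carrier := {g | (↑g : Matrix (Fin n) (Fin n) F) * h * (↑g : Matrix (Fin n) (Fin n) F)ᵀ = h}
  one_mem' := by simp
  mul_mem' := by
    intro a b ha hb
    show (↑(a * b) : Matrix (Fin n) (Fin n) F) * h * (↑(a * b) : Matrix (Fin n) (Fin n) F)ᵀ = h
    rw [Units.val_mul, transpose_mul]
    calc (↑a : Matrix (Fin n) (Fin n) F) * ↑b * h *
          ((↑b : Matrix (Fin n) (Fin n) F)ᵀ * (↑a : Matrix (Fin n) (Fin n) F)ᵀ)
        = ↑a * ((↑b : Matrix (Fin n) (Fin n) F) * h * (↑b : Matrix (Fin n) (Fin n) F)ᵀ) *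
          (↑a : Matrix (Fin n) (Fin n) F)ᵀ := by simp only [mul_assoc]
      _ = h := by rw [hb, ha]
  inv_mem' := by
    intro a ha
    show (↑(a⁻¹) : Matrix (Fin n) (Fin n) F) * h * (↑(a⁻¹) : Matrix (Fin n) (Fin n) F)ᵀ = h
    replace ha : (↑a : Matrix (Fin n) (Fin n) F) * h * (↑a : Matrix (Fin n) (Fin n) F)ᵀ = h := ha
    conv_lhs => rw [← ha]
    calc (↑(a⁻¹) : Matrix (Fin n) (Fin n) F) *
          ((↑a : Matrix (Fin n) (Fin n) F) * h * (↑a : Matrix (Fin n) (Fin n) F)ᵀ) *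
          (↑(a⁻¹) : Matrix (Fin n) (Fin n) F)ᵀ
        = ((↑(a⁻¹) : Matrix (Fin n) (Fin n) F) * ↑a) * h *
          ((↑a : Matrix (Fin n) (Fin n) F)ᵀ * (↑(a⁻¹) : Matrix (Fin n) (Fin n) F)ᵀ) := by
          simp only [mul_assoc]
      _ = h := by rw [GL_inv_mul_coe, GL_transpose_mul_transpose, one_mul, mul_one]

open scoped Classical in
/-- The induced class function `(Ind_H^G φ)(x) = (1/|H|) ∑_{y ∈ G, y⁻¹xy ∈ H} φ(y⁻¹xy)`. -/
noncomputable def ind {G : Type*} [Group G] [Fintype G] (H : Subgroup G) (φ : G → ℂ) :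
    G → ℂ :=
  fun x => (Nat.card H : ℂ)⁻¹ * ∑ y : G, if y⁻¹ * x * y ∈ H then φ (y⁻¹ * x * y) else 0

/-- The inner product `⟨φ,ψ⟩ = (1/|G|) ∑_{x ∈ G} φ(x) conj(ψ(x))` of complex functions. -/
noncomputable def innerProd {G : Type*} [Group G] [Fintype G] (φ ψ : G → ℂ) : ℂ :=
  (Nat.card G : ℂ)⁻¹ * ∑ x : G, φ x * (starRingEnd ℂ) (ψ x)

noncomputable instance (n : ℕ) (F : Type) [Field F] [Fintype F] :
    Fintype (GL (Fin n) F) := Fintype.ofFinite _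

noncomputable instance (n : ℕ) (F : Type) [Field F] [Fintype F] :
    Fintype (PGL n F) := Fintype.ofFinite _

section Average

open scoped BigOperators

lemma expect_comp_of_surjective {G K M : Type*} [Group G] [Fintype G] [Group K] [Fintype K]
    [AddCommMonoid M] [Module ℚ≥0 M] {π : G →* K} (hπ : Function.Surjective π) (f : K → M) :
    𝔼 x, f (π x) = 𝔼 y, f y := by
  have translate (y : K) : 𝔼 x, f (y * π x) = 𝔼 x, f (π x) := by
    obtain ⟨z, rfl⟩ := hπ y
    exact Fintype.expect_equiv (Equiv.mulLeft z) _ _ fun x => by simp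
  calc 𝔼 x, f (π x) = 𝔼 y : K, 𝔼 x, f (y * π x) := by
        simp only [translate, Fintype.expect_const]
    _ = 𝔼 x, 𝔼 y, f (y * π x) := Finset.expect_comm _ _ _
    _ = 𝔼 _x : G, 𝔼 y, f y := Finset.expect_congr rfl fun x _ =>
        Fintype.expect_equiv (Equiv.mulRight (π x)) _ _ fun _ => rfl
    _ = 𝔼 y, f y := Fintype.expect_const _

lemma innerProd_ind {G : Type*} [Group G] [Fintype G] (H : Subgroup G) [Fintype H] (f φ : G → ℂ) :
    innerProd f (ind H φ) =
      𝔼 y : G, 𝔼 x : H, f (y * x * y⁻¹) * (starRingEnd ℂ) (φ x) := by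
  classical
  have sum_conj (y : G) :
      ∑ x, f x * (starRingEnd ℂ) (if y⁻¹ * x * y ∈ H then φ (y⁻¹ * x * y) else 0) =
        ∑ x : H, f (y * x * y⁻¹) * (starRingEnd ℂ) (φ x) := by
    calc _ = ∑ x, if x ∈ H then f (y * x * y⁻¹) * (starRingEnd ℂ) (φ x) else 0 := by
          rw [← (MulAut.conj y).toEquiv.sum_comp]
          simp [mul_assoc, apply_ite (starRingEnd ℂ)]
      _ = _ := by
          rw [← Finset.sum_filter]
          exact Finset.sum_subtype _ (by simp) _
  calc innerProd f (ind H φ)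
      = (Nat.card G : ℂ)⁻¹ * ∑ y, (Nat.card H : ℂ)⁻¹ *
          ∑ x, f x * (starRingEnd ℂ) (if y⁻¹ * x * y ∈ H then φ (y⁻¹ * x * y) else 0) := by
        simp only [innerProd, ind, map_mul, map_inv₀, Complex.conj_natCast, map_sum,
          Finset.mul_sum, mul_left_comm (f _)]
        rw [Finset.sum_comm]
    _ = _ := by
        simp only [sum_conj, Fintype.expect_eq_sum_div_card, Nat.card_eq_fintype_card,
          div_eq_inv_mul]

lemma innerProd_comp_ind_comp {G K : Type*} [Group G] [Fintype G] [Group K] [Fintype K]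
    {π : G →* K} (hπ : Function.Surjective π) (H : Subgroup G) (f φ : K → ℂ) :
    innerProd (f ∘ π) (ind H (φ ∘ π)) = innerProd f (ind (H.map π) φ) := by
  classical
  let F (y : K) : ℂ := 𝔼 z : H.map π, f (y * z * y⁻¹) * (starRingEnd ℂ) (φ z)
  have average_subgroup (y : G) :
      𝔼 x : H, f (π (y * x * y⁻¹)) * (starRingEnd ℂ) (φ (π x)) = F (π y) := by
    simpa using expect_comp_of_surjective (π.subgroupMap_surjective H)
      fun z => f (π y * z * (π y)⁻¹) * (starRingEnd ℂ) (φ z)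
  calc innerProd (f ∘ π) (ind H (φ ∘ π)) = 𝔼 y, F (π y) := by
        simp only [innerProd_ind, Function.comp_apply, average_subgroup]
    _ = 𝔼 y, F y := expect_comp_of_surjective hπ F
    _ = innerProd f (ind (H.map π) φ) := (innerProd_ind _ f φ).symm

end Average

section Similitude

lemma det_sq_eq_pow_card_of_similitude {ι R : Type*} [Fintype ι] [DecidableEq ι] [CommRing R]
    {g h : Matrix ι ι R} {α : R} (hh : IsUnit h.det) (hg : g * h * gᵀ = α • h) :
    g.det ^ 2 = α ^ Fintype.card ι := by
  refine hh.mul_right_cancel ?_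
  calc g.det ^ 2 * h.det = (g * h * gᵀ).det := by rw [det_mul, det_mul, det_transpose]; ring
    _ = α ^ Fintype.card ι * h.det := by rw [hg, det_smul]

lemma exists_sq_mul_eq_one_and_pow_mul_eq_one {A : Type*} [CommGroup A] {n : ℕ} (hn : Odd n)
    {a d : A} (had : d ^ 2 = a ^ n) : ∃ c : A, c ^ 2 * a = 1 ∧ c ^ n * d = 1 := by
  obtain ⟨k, rfl⟩ := hn
  let c := a ^ k / d
  have sq_mul : c ^ 2 * a = 1 := by
    rw [div_pow, had, div_mul_eq_mul_div, ← pow_mul, ← pow_succ, mul_comm k 2, div_self']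
  refine ⟨c, sq_mul, ?_⟩
  calc c ^ (2 * k + 1) * d = (c ^ 2) ^ k * (c * d) := by rw [pow_succ, pow_mul, mul_assoc]
    _ = (c ^ 2 * a) ^ k := by rw [div_mul_cancel, mul_pow]
    _ = 1 := by rw [sq_mul, one_pow]

variable {F : Type} [Field F] {n : ℕ}

lemma pgl_units_smul (c : Fˣ) (g : GL (Fin n) F) : pgl n F (c • g) = pgl n F g := by
  have scalar_smul : c • g = Units.map (Matrix.scalar (Fin n)).toMonoidHom c * g :=
    Units.ext (smul_eq_diagonal_mul _ _)
  have pgl_scalar : pgl n F (Units.map (Matrix.scalar (Fin n)).toMonoidHom c) = 1 :=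
    (QuotientGroup.eq_one_iff _).mpr ⟨c, rfl⟩
  rw [scalar_smul, map_mul, pgl_scalar, one_mul]

lemma exists_smul_mem_Isom_inf_ker_det (hn : Odd n) {h g : GL (Fin n) F}
    (hg : g ∈ Sim (h : Matrix (Fin n) (Fin n) F)) :
    ∃ c : Fˣ, c • g ∈ Isom (h : Matrix (Fin n) (Fin n) F) ⊓ GeneralLinearGroup.det.ker := by
  obtain ⟨α, hα⟩ := hg
  have det_sq : GeneralLinearGroup.det g ^ 2 = α ^ n := Units.ext <| by
    simpa using det_sq_eq_pow_card_of_similitude (GeneralLinearGroup.det h).isUnit hα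
  obtain ⟨c, sq_mul, pow_mul⟩ := exists_sq_mul_eq_one_and_pow_mul_eq_one hn det_sq
  refine ⟨c, ?_, Units.ext ?_⟩
  · calc (c • g.val) * h.val * (c • g.val)ᵀ = (c ^ 2 * α) • h.val := by
          rw [transpose_smul, smul_mul_assoc, smul_mul_assoc, mul_smul_comm, hα, ← Units.smul_def,
            smul_smul, smul_smul, sq]
      _ = h.val := by rw [sq_mul, one_smul]
  · calc ((c : F) • g.val).det = (c ^ n * GeneralLinearGroup.det g : Fˣ) := by simp
      _ = 1 := by rw [pow_mul, Units.val_one]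

lemma Isom_le_Sim (h : Matrix (Fin n) (Fin n) F) : Isom h ≤ Sim h :=
  fun _ hg => ⟨1, hg.trans (one_smul F h).symm⟩

lemma map_pgl_eq_map_pgl_Sim (hn : Odd n) {h : GL (Fin n) F} {K : Subgroup (GL (Fin n) F)}
    (hSO : Isom (h : Matrix (Fin n) (Fin n) F) ⊓ GeneralLinearGroup.det.ker ≤ K)
    (hSim : K ≤ Sim (h : Matrix (Fin n) (Fin n) F)) :
    K.map (pgl n F) = (Sim (h : Matrix (Fin n) (Fin n) F)).map (pgl n F) := by
  refine le_antisymm (Subgroup.map_mono hSim) ?_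
  rintro _ ⟨g, hg, rfl⟩
  obtain ⟨c, hc⟩ := exists_smul_mem_Isom_inf_ker_det hn hg
  exact ⟨c • g, hSO hc, pgl_units_smul c g⟩

end Similitude

theorem odd_dim_induced_characters_agree_general
    (F : Type) [Field F] [Fintype F] (n : ℕ) (hn : Odd n) (h : GL (Fin n) F) (χ : PGL n F → ℂ) :
    innerProd χ (ind ((Sim (h : Matrix (Fin n) (Fin n) F)).map (pgl n F)) (fun _ => 1)) =
      innerProd (χ ∘ pgl n F)
        (ind (Isom (h : Matrix (Fin n) (Fin n) F) ⊓ GeneralLinearGroup.det.ker) (fun _ => 1)) ∧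
    innerProd (χ ∘ pgl n F)
        (ind (Isom (h : Matrix (Fin n) (Fin n) F) ⊓ GeneralLinearGroup.det.ker) (fun _ => 1)) =
      innerProd (χ ∘ pgl n F) (ind (Isom (h : Matrix (Fin n) (Fin n) F)) (fun _ => 1)) := by
  have pushforward {K : Subgroup (GL (Fin n) F)}
      (hSO : Isom (h : Matrix (Fin n) (Fin n) F) ⊓ GeneralLinearGroup.det.ker ≤ K)
      (hSim : K ≤ Sim (h : Matrix (Fin n) (Fin n) F)) :
      innerProd (χ ∘ pgl n F) (ind K (fun _ => 1)) =
        innerProd χ (ind ((Sim (h : Matrix (Fin n) (Fin n) F)).map (pgl n F)) (fun _ => 1)) := by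
    rw [← map_pgl_eq_map_pgl_Sim hn hSO hSim]
    exact innerProd_comp_ind_comp (QuotientGroup.mk'_surjective _) K χ fun _ => 1
  have hO := pushforward inf_le_left (Isom_le_Sim _)
  have hSO := pushforward le_rfl (inf_le_left.trans (Isom_le_Sim _))
  exact ⟨hSO.symm, hSO.trans hO.symm⟩

/-- Let `q` be an odd prime power, `n` odd, `h ∈ GL_n(F_q)` symmetric.
With `O(h)` the orthogonal group of `h`, `SO(h)` its determinant-one subgroup, and `S(h)`
the similitude stabilizer in `PGL_n(F_q)`, for every complex class function `χ` on
`PGL_n(F_q)`: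
`⟨χ, Ind_{S(h)}(1)⟩ = ⟨χ∘π, Ind_{SO(h)}(1)⟩ = ⟨χ∘π, Ind_{O(h)}(1)⟩`. -/
theorem odd_dim_induced_characters_agree
    (F : Type) [Field F] [Fintype F] (hodd : Odd (Fintype.card F))
    (n : ℕ) (hn : 0 < n) (hnodd : Odd n) (h : GL (Fin n) F)
    (hsymm : (↑h : Matrix (Fin n) (Fin n) F)ᵀ = (↑h : Matrix (Fin n) (Fin n) F))
    (χ : PGL n F → ℂ) (hχ : ∀ x y : PGL n F, χ (y * x * y⁻¹) = χ x) :
    innerProd χ (ind ((Sim (↑h : Matrix (Fin n) (Fin n) F)).map (pgl n F)) (fun _ => 1)) =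
      innerProd (χ ∘ (pgl n F))
        (ind ((Isom (↑h : Matrix (Fin n) (Fin n) F)) ⊓
          (Matrix.GeneralLinearGroup.det).ker) (fun _ => 1)) ∧
    innerProd (χ ∘ (pgl n F))
        (ind ((Isom (↑h : Matrix (Fin n) (Fin n) F)) ⊓
          (Matrix.GeneralLinearGroup.det).ker) (fun _ => 1)) =
      innerProd (χ ∘ (pgl n F))
        (ind (Isom (↑h : Matrix (Fin n) (Fin n) F)) (fun _ => 1)) :=
  odd_dim_induced_characters_agree_general F n hnodd h χ
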